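/- arXiv:1501.03545 — 4 statements merged into one kernel-verified Lean document; each statement's English description precedes it below -/
import Mathlib

section
/- Let α > 0, R > 0 and i ∈ ℕ. Suppose a polar quadtree cell delimited by min_r, max_r, min_φ, max_φ (with 0 ≤ min_r ≤ max_r ≤ R and 0 ≤ min_φ ≤ max_φ ≤ 2π) satisfies max_φ − min_φ = 2π/2^i and cosh(α·max_r) − cosh(α·min_r) = (cosh(α·R) − 1)/2^i, as holds for every cell at depth i of the polar quadtree. Then the probability that a random point of the model lies in this cell, namely ∫_{min_r}^{max_r} ∫_{min_φ}^{max_φ} (1/(2π))·α·sinh(α·r)/(cosh(α·R) − 1) dφ dr, equals 4^{−i}. -/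
/-!
The density of a random point is a product of a constant in `φ` and the radial density in `r`, and
`cosh (α * r)` is an antiderivative of `α * sinh (α * r)`. Hence a cell carries the product of its
share of the full angle and its share of the total increment `cosh (α * R) - 1`. Each subdivision
halves both shares, so at depth `i` both are `2⁻ⁱ`.
-/

section PolarCell

open Real intervalIntegral

lemma hasDerivAt_cosh_mul (α r : ℝ) :
    HasDerivAt (fun r ↦ cosh (α * r)) (α * sinh (α * r)) r := by
  simpa [mul_comm] using ((hasDerivAt_id r).const_mul α).cosh

lemma integral_mul_sinh_mul (α a b : ℝ) :
    ∫ r in a..b, α * sinh (α * r) = cosh (α * b) - cosh (α * a) :=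
  integral_eq_sub_of_hasDerivAt (fun r _ ↦ hasDerivAt_cosh_mul α r)
    (Continuous.intervalIntegrable (by fun_prop) a b)

/-- The probability density `f` of the radial coordinate in the random hyperbolic graph model with
dispersion `α` on the hyperbolic disk of radius `R`, given by the same formula for every real `r`,
not only for `r ∈ [0, R]`. -/
noncomputable def radialDensity (α R r : ℝ) : ℝ :=
  α * sinh (α * r) / (cosh (α * R) - 1)

lemma integral_radialDensity (α R a b : ℝ) :
    ∫ r in a..b, radialDensity α R r =
      (cosh (α * b) - cosh (α * a)) / (cosh (α * R) - 1) := by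
  simp only [radialDensity, integral_div, integral_mul_sinh_mul]

lemma integral_integral_radialDensity (α R a b c d : ℝ) :
    ∫ r in a..b, ∫ _φ in c..d, 1 / (2 * π) * radialDensity α R r =
      (d - c) / (2 * π) * ((cosh (α * b) - cosh (α * a)) / (cosh (α * R) - 1)) := by
  simp only [integral_const, smul_eq_mul, integral_const_mul, integral_radialDensity]
  ring

end PolarCell

open Real in
/-- A polar quadtree cell at depth `i` — i.e. with angular width `2π/2^i` and with
`cosh(α·max_r) − cosh(α·min_r) = (cosh(α·R) − 1)/2^i` — contains a random point of the
model with probability exactly `4⁻ⁱ`. -/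
theorem quadtree_cell_depth_probability (α R minr maxr minφ maxφ : ℝ) (i : ℕ)
    (hα : 0 < α) (hR : 0 < R)
    (h1 : 0 ≤ minr) (h2 : minr ≤ maxr) (h3 : maxr ≤ R)
    (h4 : 0 ≤ minφ) (h5 : minφ ≤ maxφ) (h6 : maxφ ≤ 2 * π)
    (hφ : maxφ - minφ = 2 * π / 2 ^ i)
    (hr : Real.cosh (α * maxr) - Real.cosh (α * minr) = (Real.cosh (α * R) - 1) / 2 ^ i) :
    (∫ r in minr..maxr, ∫ _φ in minφ..maxφ,
        (1 / (2 * π)) * (α * Real.sinh (α * r) / (Real.cosh (α * R) - 1))) =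
      ((4 : ℝ) ^ i)⁻¹ := by
  have total_ne_zero : cosh (α * R) - 1 ≠ 0 :=
    (sub_pos.mpr (one_lt_cosh.mpr (mul_pos hα hR).ne')).ne'
  have angular_share : (maxφ - minφ) / (2 * π) = (2 ^ i)⁻¹ := by
    rw [hφ, div_right_comm, div_self two_pi_pos.ne', one_div]
  have radial_share :
      (cosh (α * maxr) - cosh (α * minr)) / (cosh (α * R) - 1) = (2 ^ i)⁻¹ := by
    rw [hr, div_right_comm, div_self total_ne_zero, one_div]
  calc
    _ = (maxφ - minφ) / (2 * π) *
        ((cosh (α * maxr) - cosh (α * minr)) / (cosh (α * R) - 1)) :=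
      integral_integral_radialDensity α R minr maxr minφ maxφ
    _ = (2 ^ i)⁻¹ * (2 ^ i)⁻¹ := by rw [angular_share, radial_share]
    _ = (4 ^ i)⁻¹ := by rw [← mul_inv, ← mul_pow]; norm_num
end

section
/- There exists N ∈ ℕ such that for all n ≥ N the following holds: if n balls are thrown independently and uniformly at random into n bins (i.e., the ball placements X₁, …, Xₙ are i.i.d. uniform on a set of n bins), then the probability that some bin receives more than 3·ln n / ln ln n balls is at most 1/n. -/
/-!
If some bin receives at least `k` balls, then some `k`-element set of balls lands in a single bin.
For `m ≤ n` balls in `n` bins, the union bound over the `n * m.choose k` choices of a bin and a set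
gives probability at most `n * m.choose k / n ^ k ≤ n / k!`. By Stirling, `log k!` is at least
`k * (log k - 1)`; at `k = c * log n / log (log n)` this is asymptotically `c * log n`, because
`log k` is asymptotically `log (log n)`. So for `r + 1 < c` and large `n`, `k!` is at least
`n ^ (r + 1)` and the probability is at most `n ^ (-r)`.
-/

open Filter Finset Real
open scoped Nat

section FiberCard

variable {α β : Type*} [Fintype α] [DecidableEq α] [Fintype β] [DecidableEq β]

theorem card_filter_forall_mem_eq_mul_pow (g : α → β) (S : Finset α) :
    #{f : α → β | ∀ a ∈ S, f a = g a} * Fintype.card β ^ #S =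
      Fintype.card β ^ Fintype.card α := by
  have h_pi : ({f : α → β | ∀ a ∈ S, f a = g a} : Finset (α → β)) =
      Fintype.piFinset fun a ↦ if a ∈ S then {g a} else univ := by
    ext f
    simp only [mem_filter_univ, Fintype.mem_piFinset]
    refine forall_congr' fun a ↦ ?_
    split_ifs with ha <;> simp [ha]
  have h_pow : Fintype.card β ^ #S = ∏ a, if a ∈ S then Fintype.card β else 1 := by
    simp [prod_ite_mem]
  rw [h_pi, Fintype.card_piFinset, h_pow, ← prod_mul_distrib, ← card_univ (α := α), ← prod_const]
  refine prod_congr rfl fun a _ ↦ ?_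
  split_ifs <;> simp

theorem card_filter_exists_le_card_fiber_mul_pow_le (k : ℕ) :
    #{f : α → β | ∃ b, k ≤ #{a | f a = b}} * Fintype.card β ^ k ≤
      Fintype.card β * (Fintype.card α).choose k * Fintype.card β ^ Fintype.card α := by
  have h_cover : ({f : α → β | ∃ b, k ≤ #{a | f a = b}} : Finset (α → β)) ⊆
      (univ ×ˢ powersetCard k univ).biUnion
        fun p : β × Finset α ↦ {f | ∀ a ∈ p.2, f a = p.1} := by
    intro f hf
    obtain ⟨b, hb⟩ := (mem_filter_univ f).1 hf
    obtain ⟨S, hS, hSk⟩ := exists_subset_card_eq hb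
    refine mem_biUnion.2 ⟨(b, S), by simp [mem_powersetCard, hSk], ?_⟩
    exact (mem_filter_univ f).2 fun a ha ↦ (mem_filter_univ a).1 (hS ha)
  calc #{f : α → β | ∃ b, k ≤ #{a | f a = b}} * Fintype.card β ^ k
      ≤ (∑ p ∈ (univ : Finset β) ×ˢ powersetCard k (univ : Finset α),
          #{f : α → β | ∀ a ∈ p.2, f a = p.1}) * Fintype.card β ^ k := by
        gcongr
        exact (card_le_card h_cover).trans card_biUnion_le
    _ = ∑ _ ∈ (univ : Finset β) ×ˢ powersetCard k (univ : Finset α),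
          Fintype.card β ^ Fintype.card α := by
        rw [sum_mul]
        refine sum_congr rfl fun ⟨b, S⟩ hp ↦ ?_
        rw [← (mem_powersetCard.1 (mem_product.1 hp).2).2]
        exact card_filter_forall_mem_eq_mul_pow (fun _ ↦ b) S
    _ = Fintype.card β * (Fintype.card α).choose k * Fintype.card β ^ Fintype.card α := by
        simp

theorem card_filter_exists_le_card_fiber_div_le (h : Fintype.card α ≤ Fintype.card β) (k : ℕ) :
    (#{f : α → β | ∃ b, k ≤ #{a | f a = b}} : ℝ) / Fintype.card β ^ Fintype.card α ≤
      Fintype.card β / k ! := by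
  obtain _ | _ := isEmpty_or_nonempty β
  · simp
  set n := Fintype.card β
  set m := Fintype.card α
  have hn : (0 : ℝ) < n := mod_cast Fintype.card_pos
  have h_union : (#{f : α → β | ∃ b, k ≤ #{a | f a = b}} : ℝ) * n ^ k ≤
      n * m.choose k * n ^ m :=
    mod_cast card_filter_exists_le_card_fiber_mul_pow_le k
  calc (#{f : α → β | ∃ b, k ≤ #{a | f a = b}} : ℝ) / n ^ m
      ≤ n * m.choose k / n ^ k := by
        rwa [div_le_div_iff₀ (by positivity) (by positivity)]
    _ ≤ n * (n ^ k / k !) / n ^ k := by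
        gcongr
        exact (Nat.choose_le_pow_div k m).trans (by gcongr)
    _ = n / k ! := by field_simp

end FiberCard

theorem eventually_const_add_log_le_mul (a : ℝ) {ε : ℝ} (hε : 0 < ε) :
    ∀ᶠ x : ℝ in atTop, a + log x ≤ ε * x := by
  have h_o := (Asymptotics.isLittleO_const_id_atTop a).add isLittleO_log_id_atTop
  filter_upwards [h_o.bound hε, eventually_ge_atTop 0] with x hx hx0
  rw [id, norm_of_nonneg hx0] at hx
  exact (le_norm_self _).trans hx

theorem eventually_mul_le_mul_log_sub_one {r c : ℝ} (hc : 0 < c) (hrc : r < c) :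
    ∀ᶠ x : ℝ in atTop, r * x ≤ c * x / log x * (log (c * x / log x) - 1) := by
  have h_gap : 0 < 1 - r / c := sub_pos.2 ((div_lt_one hc).2 hrc)
  filter_upwards [tendsto_log_atTop.eventually (eventually_const_add_log_le_mul (1 - log c) h_gap),
    eventually_gt_atTop 1] with x hx hx1
  have hx0 : 0 < x := one_pos.trans hx1
  have h_log : 0 < log x := log_pos hx1
  have h_log_t : log (c * x / log x) = log c + log x - log (log x) := by
    rw [log_div (by positivity) h_log.ne', log_mul hc.ne' hx0.ne']
  calc r * x = c * x / log x * (r / c * log x) := by field_simp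
    _ ≤ c * x / log x * (log (c * x / log x) - 1) := by
        gcongr
        linarith

theorem mul_log_sub_one_le_log_factorial (k : ℕ) : k * (log k - 1) ≤ log k ! := by
  obtain rfl | hk := eq_or_ne k 0
  · simp
  have h_stirling := Stirling.le_log_factorial_stirling hk
  have h_log : 0 ≤ log k := log_natCast_nonneg k
  have h_log_pi : 0 ≤ log (2 * π) := log_nonneg (by linarith [pi_gt_three])
  linarith

theorem eventually_rpow_le_factorial {r c : ℝ} (hr : 0 ≤ r) (hrc : r < c) :
    ∀ᶠ x : ℝ in atTop, ∀ k : ℕ, c * log x / log (log x) ≤ k → x ^ r ≤ k ! := by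
  have hc : 0 < c := hr.trans_lt hrc
  filter_upwards [tendsto_log_atTop.eventually (eventually_mul_le_mul_log_sub_one hc hrc),
    tendsto_log_atTop.eventually_gt_atTop 1, eventually_gt_atTop 0] with x hx h_log hx0 k hk
  set t := c * log x / log (log x)
  have ht : 0 < t := div_pos (mul_pos hc (one_pos.trans h_log)) (log_pos h_log)
  have h_log_t : 0 ≤ log t - 1 :=
    nonneg_of_mul_nonneg_right ((mul_nonneg hr (one_pos.trans h_log).le).trans hx) ht
  rw [← log_le_log_iff (by positivity) (by positivity), log_rpow hx0]
  calc r * log x ≤ t * (log t - 1) := hx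
    _ ≤ k * (log k - 1) := by gcongr
    _ ≤ log k ! := mul_log_sub_one_le_log_factorial k

theorem balls_into_bins_max_load_general {r c : ℝ} (hr : -1 ≤ r) (hrc : r + 1 < c) :
    ∀ᶠ n : ℕ in atTop, ∀ m ≤ n,
      (#{f : Fin m → Fin n | ∃ b, c * log n / log (log n) < #{i | f i = b}} : ℝ) / n ^ m ≤
        (n : ℝ) ^ (-r) := by
  have h_factorial := eventually_rpow_le_factorial (neg_le_iff_add_nonneg.1 hr) hrc
  filter_upwards [tendsto_natCast_atTop_atTop.eventually h_factorial, eventually_gt_atTop 0]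
    with n hn hn0 m hmn
  set t := c * log n / log (log n)
  calc (#{f : Fin m → Fin n | ∃ b, t < #{i | f i = b}} : ℝ) / n ^ m
      ≤ #{f : Fin m → Fin n | ∃ b, ⌈t⌉₊ ≤ #{i | f i = b}} / n ^ m := by
        gcongr with f
        exact fun hb ↦ Nat.ceil_le.2 hb.le
    _ ≤ n / ⌈t⌉₊ ! := by
        simpa using card_filter_exists_le_card_fiber_div_le (α := Fin m) (β := Fin n)
          (by simpa using hmn) ⌈t⌉₊
    _ ≤ n / (n : ℝ) ^ (r + 1) := by
        gcongr
        exact hn _ (Nat.le_ceil t)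
    _ = (n : ℝ) ^ (-r) := by
        rw [rpow_add_one (by positivity), rpow_neg (by positivity)]
        field_simp

open scoped Classical in
/-- Balls into bins: there is an `N` such that for all `n ≥ N`, when `n` balls are thrown
independently and uniformly at random into `n` bins (uniform random function
`Fin n → Fin n`), the probability that some bin receives more than `3 ln n / ln ln n`
balls is at most `1/n`. -/
theorem balls_into_bins_max_load :
    ∃ N : ℕ, ∀ n : ℕ, N ≤ n →
      (((Finset.univ.filter (fun f : Fin n → Fin n =>
            ∃ b : Fin n,
              3 * Real.log n / Real.log (Real.log n) <
                ((Finset.univ.filter (fun i : Fin n => f i = b)).card : ℝ))).card : ℝ) /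
          (n : ℝ) ^ n) ≤ 1 / n := by
  obtain ⟨N, hN⟩ := eventually_atTop.1
    (balls_into_bins_max_load_general (r := 1) (c := 3) (by norm_num) (by norm_num))
  exact ⟨N, fun n hn ↦ by simpa [rpow_neg_one] using hN n hn n le_rfl⟩
end

section
/- Let n ∈ ℕ, let p ∈ (0, 1), and let X be a binomially distributed random variable with n trials and success probability p. Then for every t with p ≤ t < 1, P(X ≥ t·n) ≤ exp(−n·H(t, p)), where H(t, p) := t·ln(t/p) + (1 − t)·ln((1 − t)/(1 − p)) is the relative entropy (Kullback–Leibler divergence) between the Bernoulli distributions with parameters t and p. -/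
/-!
Weighting the value `k` by `exp (l * (k - t * n))`, which is at least `1` on the tail
`t * n ≤ k` when `0 ≤ l`, bounds the tail by `exp (-(l * (t * n))) * (p * exp l + (1 - p)) ^ n`.
The bound is minimized by the `l` for which `k ↦ p ^ k * (1 - p) ^ (n - k) * exp (l * k)` is
proportional to `k ↦ t ^ k * (1 - t) ^ (n - k)`, that is, by the logarithm of the odds ratio
of `t` and `p`; it is nonnegative because `p ≤ t`, and the minimum is `exp (-(n * H(t, p)))`.
-/

open Finset Real

theorem sum_filter_le_exp_mul_sum {ι : Type*} (s : Finset ι) (f w : ι → ℝ) (c : ℝ) {l : ℝ}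
    (hl : 0 ≤ l) (hw : ∀ i ∈ s, 0 ≤ w i) :
    ∑ i ∈ s with c ≤ f i, w i ≤ exp (-(l * c)) * ∑ i ∈ s, w i * exp (l * f i) := by
  have weight_le : ∀ i ∈ s.filter (c ≤ f ·), w i ≤ exp (-(l * c)) * (w i * exp (l * f i)) := by
    intro i hi
    obtain ⟨his, hci⟩ := mem_filter.mp hi
    have one_le_tilt : 1 ≤ exp (-(l * c) + l * f i) :=
      one_le_exp (by linarith [mul_le_mul_of_nonneg_left hci hl])
    calc w i ≤ w i * exp (-(l * c) + l * f i) := le_mul_of_one_le_right (hw i his) one_le_tilt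
      _ = exp (-(l * c)) * (w i * exp (l * f i)) := by rw [exp_add]; ring
  calc ∑ i ∈ s with c ≤ f i, w i
      ≤ ∑ i ∈ s with c ≤ f i, exp (-(l * c)) * (w i * exp (l * f i)) := sum_le_sum weight_le
    _ ≤ ∑ i ∈ s, exp (-(l * c)) * (w i * exp (l * f i)) :=
        sum_le_sum_of_subset_of_nonneg (filter_subset _ _) fun i his _ =>
          mul_nonneg (exp_nonneg _) (mul_nonneg (hw i his) (exp_nonneg _))
    _ = exp (-(l * c)) * ∑ i ∈ s, w i * exp (l * f i) := (mul_sum ..).symm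

theorem sum_choose_mul_pow_mul_exp (n : ℕ) (x y l : ℝ) :
    ∑ k ∈ range (n + 1), (n.choose k : ℝ) * x ^ k * y ^ (n - k) * exp (l * k) =
      (x * exp l + y) ^ n := by
  rw [add_pow]
  refine sum_congr rfl fun k _ => ?_
  rw [mul_pow, ← exp_nat_mul, mul_comm l]
  ring

theorem sum_choose_mul_pow_tail_le (n : ℕ) (c : ℝ) {x y l : ℝ} (hx : 0 ≤ x) (hy : 0 ≤ y)
    (hl : 0 ≤ l) :
    ∑ k ∈ (range (n + 1)).filter (fun k : ℕ => c ≤ (k : ℝ)),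
        (n.choose k : ℝ) * x ^ k * y ^ (n - k) ≤
      exp (-(l * c)) * (x * exp l + y) ^ n := by
  rw [← sum_choose_mul_pow_mul_exp]
  exact sum_filter_le_exp_mul_sum _ (fun k : ℕ => (k : ℝ)) _ c hl fun k _ => by positivity

/-- The relative entropy `H(t, p)` of the Bernoulli distribution with parameter `t` from the one
with parameter `p`, in nats: the exponential decay rate of the binomial tail. -/
noncomputable def bernoulliRelEntropy (t p : ℝ) : ℝ :=
  t * log (t / p) + (1 - t) * log ((1 - t) / (1 - p))

/-- The logarithm of the odds ratio `(t / (1 - t)) / (p / (1 - p))`: the exponential tilt that turns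
the Bernoulli distribution with parameter `p` into the one with parameter `t`. It is written as a
difference of the two log-likelihood ratios that occur in `bernoulliRelEntropy`. -/
noncomputable def logOddsRatio (t p : ℝ) : ℝ :=
  log (t / p) - log ((1 - t) / (1 - p))

theorem logOddsRatio_nonneg {t p : ℝ} (hp : 0 < p) (hpt : p ≤ t) (ht : t < 1) :
    0 ≤ logOddsRatio t p := by
  have hq : 0 < 1 - p := by linarith
  have success_ratio : 0 ≤ log (t / p) := log_nonneg ((one_le_div hp).mpr hpt)
  have failure_ratio : log ((1 - t) / (1 - p)) ≤ 0 :=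
    log_nonpos (div_nonneg (by linarith) hq.le) ((div_le_one hq).mpr (by linarith))
  exact sub_nonneg.mpr (failure_ratio.trans success_ratio)

theorem mul_exp_logOddsRatio_add_one_sub {t p : ℝ} (hp0 : 0 < p) (hp1 : p < 1) (ht0 : 0 < t)
    (ht1 : t < 1) :
    p * exp (logOddsRatio t p) + (1 - p) = exp (-log ((1 - t) / (1 - p))) := by
  have hq : 0 < 1 - p := sub_pos.mpr hp1
  have hs : 0 < 1 - t := sub_pos.mpr ht1
  rw [logOddsRatio, exp_sub, exp_neg, exp_log (div_pos ht0 hp0), exp_log (div_pos hs hq)]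
  field_simp
  ring

theorem exp_neg_mul_mul_pow_logOddsRatio (n : ℕ) {t p : ℝ} (hp0 : 0 < p) (hp1 : p < 1)
    (ht0 : 0 < t) (ht1 : t < 1) :
    exp (-(logOddsRatio t p * (t * n))) * (p * exp (logOddsRatio t p) + (1 - p)) ^ n =
      exp (-(n * bernoulliRelEntropy t p)) := by
  rw [mul_exp_logOddsRatio_add_one_sub hp0 hp1 ht0 ht1, ← exp_nat_mul, ← exp_add, logOddsRatio,
    bernoulliRelEntropy]
  ring_nf

open scoped Classical in
/-- Relative-entropy Chernoff bound for the upper tail of a binomial random variable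
`X ~ B(n, p)`: for `p ≤ t < 1`, `P(X ≥ t·n) ≤ exp(−n·H(t, p))`, where
`H(t, p) = t·ln(t/p) + (1 − t)·ln((1 − t)/(1 − p))`. -/
theorem binomial_tail_relative_entropy_bound (n : ℕ) (p t : ℝ)
    (hp0 : 0 < p) (hp1 : p < 1) (hpt : p ≤ t) (ht1 : t < 1) :
    ∑ k ∈ (Finset.range (n + 1)).filter (fun k : ℕ => t * n ≤ (k : ℝ)),
        (n.choose k : ℝ) * p ^ k * (1 - p) ^ (n - k) ≤
      Real.exp (-(n * (t * Real.log (t / p) + (1 - t) * Real.log ((1 - t) / (1 - p))))) := by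
  calc ∑ k ∈ (range (n + 1)).filter (fun k : ℕ => t * n ≤ (k : ℝ)),
          (n.choose k : ℝ) * p ^ k * (1 - p) ^ (n - k)
      ≤ exp (-(logOddsRatio t p * (t * n))) * (p * exp (logOddsRatio t p) + (1 - p)) ^ n :=
        sum_choose_mul_pow_tail_le n (t * n) hp0.le (sub_nonneg.mpr hp1.le)
          (logOddsRatio_nonneg hp0 hpt ht1)
    _ = exp (-(n * bernoulliRelEntropy t p)) :=
        exp_neg_mul_mul_pow_logOddsRatio n hp0 hp1 (hp0.trans_le hpt) ht1
end

section
/- Let c ≥ 1 be a real number and, for n ∈ ℕ with n > 4c², define b_n := n · 4^{−c·√n} · (1 + c/(√n − 2c))^{n − 2c·√n}. Then for all sufficiently large n one has b_n ≤ 0.7^{√n}; in particular b_n → 0 as n → ∞, and b_n ≤ 1 (equivalently, the quantity b_n/n is at most 1/n) for all sufficiently large n. -/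
/-!
Write `s = √n`, so that `n - 2cs = (s - 2c)s`. Since `1 + x ≤ exp x`, the last factor of `b_n` is
at most `exp (cs)`, hence `b_n ≤ s² ((e/4)^c)^s`. The polynomial factor is absorbed by any base
larger than `(e/4)^c`, and `(e/4)^c ≤ e/4 < 0.7` once `c ≥ 1`.
-/

open Asymptotics Filter Real Topology

theorem isLittleO_pow_mul_rpow_rpow (k : ℕ) {q r : ℝ} (hq : 0 < q) (hqr : q < r) :
    (fun x : ℝ => x ^ k * q ^ x) =o[atTop] fun x => r ^ x := by
  have hlog : 0 < log (r / q) := log_pos ((one_lt_div hq).2 hqr)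
  refine ((isLittleO_pow_exp_pos_mul_atTop k hlog).mul_isBigO
    (isBigO_refl (fun x : ℝ => q ^ x) atTop)).congr_right fun x => ?_
  have hrq : 0 < r / q := div_pos (hq.trans hqr) hq
  rw [← rpow_def_of_pos hrq, ← mul_rpow hrq.le hq.le, div_mul_cancel₀ _ hq.ne']

theorem one_add_div_nonneg {x t : ℝ} (ht : 0 < t) (hx : -t ≤ x) : 0 ≤ 1 + x / t := by
  rw [one_add_div ht.ne']
  exact div_nonneg (neg_le_iff_add_nonneg'.1 hx) ht.le

theorem one_add_div_rpow_mul_le_exp_mul {x t y : ℝ} (ht : 0 < t) (hx : -t ≤ x) (hy : 0 ≤ y) :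
    (1 + x / t) ^ (t * y) ≤ exp (x * y) :=
  calc
    (1 + x / t) ^ (t * y) ≤ exp (x / t) ^ (t * y) := by
      gcongr
      · exact one_add_div_nonneg ht hx
      · exact (add_comm _ _).trans_le (add_one_le_exp _)
    _ = exp (x * y) := by rw [← exp_mul, ← mul_assoc, div_mul_cancel₀ _ ht.ne']

/-- The sequence `b_n`: `n` times the relative-entropy Chernoff bound for the probability that a
binomial variable with `n` trials and success probability `c / √n` is at least `2 * c * √n`.
The formula has this meaning only for `0 < c` and `2 * c < √n`; elsewhere it may take junk
values. -/
noncomputable def scaledChernoffBound (c : ℝ) (n : ℕ) : ℝ :=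
  n * 4 ^ (-(c * √n)) * (1 + c / (√n - 2 * c)) ^ (n - 2 * c * √n)

section

variable {c : ℝ} {n : ℕ}

theorem neg_sqrt_sub_two_mul_le (hn : 2 * c < √n) : -(√n - 2 * c) ≤ c := by
  linarith [sqrt_nonneg n]

theorem scaledChernoffBound_nonneg (hn : 2 * c < √n) : 0 ≤ scaledChernoffBound c n := by
  have hbase := one_add_div_nonneg (sub_pos.2 hn) (neg_sqrt_sub_two_mul_le hn)
  unfold scaledChernoffBound
  positivity

theorem scaledChernoffBound_le (hn : 2 * c < √n) :
    scaledChernoffBound c n ≤ √n ^ 2 * ((exp 1 / 4) ^ c) ^ √n := by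
  have hexponent : n - 2 * c * √n = (√n - 2 * c) * √n := by
    rw [sub_mul, mul_self_sqrt n.cast_nonneg]
  calc
    scaledChernoffBound c n
        = n * 4 ^ (-(c * √n)) * (1 + c / (√n - 2 * c)) ^ ((√n - 2 * c) * √n) := by
      rw [scaledChernoffBound, hexponent]
    _ ≤ n * 4 ^ (-(c * √n)) * exp (c * √n) := by
      gcongr
      exact one_add_div_rpow_mul_le_exp_mul (sub_pos.2 hn) (neg_sqrt_sub_two_mul_le hn)
        (sqrt_nonneg n)
    _ = √n ^ 2 * ((exp 1 / 4) ^ c) ^ √n := by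
      rw [sq_sqrt n.cast_nonneg, ← rpow_mul (by positivity), div_rpow (exp_pos 1).le zero_le_four,
        exp_one_rpow, rpow_neg zero_le_four]
      ring

end

theorem tendsto_sqrt_natCast_atTop : Tendsto (fun n : ℕ => √n) atTop atTop :=
  tendsto_sqrt_atTop.comp tendsto_natCast_atTop_atTop

theorem eventually_scaledChernoffBound_le_rpow {c r : ℝ} (hr : (exp 1 / 4) ^ c < r) :
    ∀ᶠ n : ℕ in atTop, scaledChernoffBound c n ≤ r ^ √n := by
  have hq : 0 < (exp 1 / 4) ^ c := by positivity
  have hgrowth : ∀ᶠ x : ℝ in atTop, x ^ 2 * ((exp 1 / 4) ^ c) ^ x ≤ r ^ x := by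
    filter_upwards [(isLittleO_pow_mul_rpow_rpow 2 hq hr).eventuallyLE] with x hx
    rw [norm_of_nonneg (by positivity), norm_of_nonneg (rpow_nonneg (hq.trans hr).le x)] at hx
    exact hx
  filter_upwards [tendsto_sqrt_natCast_atTop.eventually hgrowth,
    tendsto_sqrt_natCast_atTop.eventually_gt_atTop (2 * c)] with n hn hcn
  exact (scaledChernoffBound_le hcn).trans hn

theorem exp_one_div_four_lt : exp 1 / 4 < 0.7 := by
  linarith [exp_one_lt_d9]

theorem tendsto_scaledChernoffBound_zero {c : ℝ} (hc : 0 < c) :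
    Tendsto (scaledChernoffBound c) atTop (𝓝 0) := by
  have hq : (exp 1 / 4) ^ c < 1 :=
    rpow_lt_one (by positivity) (exp_one_div_four_lt.trans (by norm_num)) hc
  obtain ⟨r, hqr, hr1⟩ := exists_between hq
  have hr : 0 < r := lt_trans (by positivity) hqr
  have hpow : Tendsto (fun n : ℕ => r ^ √n) atTop (𝓝 0) :=
    (tendsto_rpow_atTop_of_base_lt_one r (by linarith) hr1).comp tendsto_sqrt_natCast_atTop
  refine squeeze_zero' ?_ (eventually_scaledChernoffBound_le_rpow hqr) hpow
  filter_upwards [tendsto_sqrt_natCast_atTop.eventually_gt_atTop (2 * c)] with n hn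
  exact scaledChernoffBound_nonneg hn

theorem bn_decays_general {c : ℝ} (hc : 0 < c) :
    (∀ r > (exp 1 / 4) ^ c, ∀ᶠ n : ℕ in atTop, scaledChernoffBound c n ≤ r ^ √n) ∧
      Tendsto (scaledChernoffBound c) atTop (𝓝 0) ∧
      (∀ᶠ n : ℕ in atTop, scaledChernoffBound c n ≤ 1) :=
  have hlim := tendsto_scaledChernoffBound_zero hc
  ⟨fun _ => eventually_scaledChernoffBound_le_rpow, hlim, hlim.eventually_le_const one_pos⟩

theorem exp_one_div_four_rpow_lt {c : ℝ} (hc : 1 ≤ c) : (exp 1 / 4) ^ c < 0.7 :=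
  (rpow_le_self_of_le_one (by positivity) (exp_one_div_four_lt.le.trans (by norm_num)) hc).trans_lt
    exp_one_div_four_lt

open Filter in
/-- For `c ≥ 1` and `b_n = n · 4^{−c√n} · (1 + c/(√n − 2c))^{n − 2c√n}`: for all
sufficiently large `n`, `b_n ≤ 0.7^{√n}`; in particular `b_n → 0`, and `b_n ≤ 1`
(equivalently `b_n / n ≤ 1/n`) for all sufficiently large `n`. -/
theorem bn_decays (c : ℝ) (hc : 1 ≤ c) :
    let b : ℕ → ℝ := fun n =>
      (n : ℝ) * (4 : ℝ) ^ (-(c * Real.sqrt n)) *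
        (1 + c / (Real.sqrt n - 2 * c)) ^ ((n : ℝ) - 2 * c * Real.sqrt n)
    (∀ᶠ n : ℕ in atTop, b n ≤ (0.7 : ℝ) ^ Real.sqrt n) ∧
      Tendsto b atTop (nhds 0) ∧
      (∀ᶠ n : ℕ in atTop, b n ≤ 1) := by
  have h := bn_decays_general (c := c) (by linarith)
  exact ⟨h.1 0.7 (exp_one_div_four_rpow_lt hc), h.2⟩
end
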